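/- Let n ≥ 3. The coefficients in the lifted inequalities DL-1 and DL-2 are maximal among valid inequalities, in the following sense: (a) if a ∈ ℝ is such that 1 + (1 − x_{0j}) + a·x_{j,n+1} ≤ u(j) holds for every drone tour and every intermediate node j ∈ {1,…,n}, then a ≤ n − 2; (b) if b ∈ ℝ is such that u(j) ≤ (n + 1) − b·x_{0j} − (1 − x_{j,n+1}) holds for every drone tour and every intermediate node j, then b ≤ n − 1; (c) if c ∈ ℝ is such that u(i) − u(j) + (n + 1)·x_{ij} + c·x_{ji} ≤ n holds for every drone tour and every arc (i,j) ∈ A with i ≠ 0, then c ≤ n − 1. -/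

import Mathlib

/-- Real-valued arc indicator of a drone tour on the node set `H = {0, 1, …, n+1}`
(modelled as `Fin (n+2)`): `xind n u i j = 1` iff `(i,j)` is in the arc set
`A = {(i,j) : i ≠ j, i ≠ n+1, j ≠ 0}` and `j` is visited immediately after `i`
(i.e. `u j = u i + 1`); by convention it is `0` for pairs outside `A`. -/
def xind (n : ℕ) (u : Fin (n + 2) → Fin (n + 2)) (i j : Fin (n + 2)) : ℝ :=
  if i ≠ j ∧ i ≠ Fin.last (n + 1) ∧ j ≠ 0 ∧ (u j : ℕ) = (u i : ℕ) + 1 then 1 else 0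

/-- A drone tour on `H = {0, …, n+1}`: a bijection `u` of `Fin (n+2)` (the rank map)
with `u 0 = 0` and `u (n+1) = n+1`. -/
def IsDroneTour (n : ℕ) (u : Fin (n + 2) → Fin (n + 2)) : Prop :=
  Function.Bijective u ∧ u 0 = 0 ∧ u (Fin.last (n + 1)) = Fin.last (n + 1)

/-!
Fix a tour and a node (or arc) at which the lifted variable equals `1`. The values of all other
terms are then forced, so the inequality evaluated there bounds the coefficient by a constant. For
`a` the node is the one visited last before the return to the depot, for `b` it is the one visited
first, and for `c` it is any arc `(i, j)` such that `j` is visited immediately before `i`. The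
identity tour exhibits all three.
-/

theorem isDroneTour_id (n : ℕ) : IsDroneTour n id :=
  ⟨Function.bijective_id, rfl, rfl⟩

namespace IsDroneTour

variable {n : ℕ} {u : Fin (n + 2) → Fin (n + 2)} {i j : Fin (n + 2)}

-- Membership in the arc set is automatic: no node has rank `n + 2`, and rank `0` is not a
-- successor.
theorem xind_eq_ite (hu : IsDroneTour n u) (i j : Fin (n + 2)) :
    xind n u i j = if (u j : ℕ) = u i + 1 then 1 else 0 := by
  obtain ⟨-, h_zero, h_last⟩ := hu
  refine if_congr ⟨fun h => h.2.2.2, fun h => ⟨?_, ?_, ?_, h⟩⟩ rfl rfl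
  · rintro rfl
    omega
  · rintro rfl
    rw [h_last, Fin.val_last] at h
    omega
  · rintro rfl
    rw [h_zero, Fin.val_zero] at h
    omega

theorem xind_zero_left (hu : IsDroneTour n u) (j : Fin (n + 2)) :
    xind n u 0 j = if (u j : ℕ) = 1 then 1 else 0 := by
  rw [hu.xind_eq_ite, hu.2.1, Fin.val_zero, zero_add]

theorem xind_last_right (hu : IsDroneTour n u) (j : Fin (n + 2)) :
    xind n u j (Fin.last (n + 1)) = if (u j : ℕ) = n then 1 else 0 := by
  simp only [hu.xind_eq_ite, hu.2.2, Fin.val_last, Nat.add_right_cancel_iff, eq_comm]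

theorem dl1_lower_coeff_le (hu : IsDroneTour n u) (hn : n ≠ 1) (hj : (u j : ℕ) = n) {a : ℝ}
    (h : 1 + (1 - xind n u 0 j) + a * xind n u j (Fin.last (n + 1)) ≤ ((u j : ℕ) : ℝ)) :
    a ≤ (n : ℝ) - 2 := by
  rw [hu.xind_zero_left, hu.xind_last_right, hj, if_neg hn, if_pos rfl] at h
  linarith

theorem dl1_upper_coeff_le (hu : IsDroneTour n u) (hn : n ≠ 1) (hj : (u j : ℕ) = 1) {b : ℝ}
    (h : ((u j : ℕ) : ℝ) ≤ ((n : ℝ) + 1) - b * xind n u 0 j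
      - (1 - xind n u j (Fin.last (n + 1)))) :
    b ≤ (n : ℝ) - 1 := by
  rw [hu.xind_zero_left, hu.xind_last_right, hj, if_pos rfl, if_neg hn.symm, Nat.cast_one] at h
  linarith

theorem dl2_coeff_le (hu : IsDroneTour n u) (hij : (u i : ℕ) = u j + 1) {c : ℝ}
    (h : ((u i : ℕ) : ℝ) - ((u j : ℕ) : ℝ) + ((n : ℝ) + 1) * xind n u i j
      + c * xind n u j i ≤ (n : ℝ)) :
    c ≤ (n : ℝ) - 1 := by
  have not_forward : (u j : ℕ) ≠ u i + 1 := by omega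
  rw [hu.xind_eq_ite i j, hu.xind_eq_ite j i, if_neg not_forward, if_pos hij, hij,
    Nat.cast_succ] at h
  linarith

end IsDroneTour

/-- Coefficient maximality in the proof of Proposition 2: the coefficients `n − 2`,
`n − 1` and `n − 1` in the lifted MTZ inequalities DL-1 and DL-2 are the largest real
coefficients for which the corresponding inequalities remain valid for all drone
tours. -/
theorem dl_coefficients_maximal (n : ℕ) (hn : 3 ≤ n) :
    (∀ a : ℝ,
      (∀ u : Fin (n + 2) → Fin (n + 2), IsDroneTour n u →
        ∀ j : Fin (n + 2), j ≠ 0 → j ≠ Fin.last (n + 1) →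
          1 + (1 - xind n u 0 j) + a * xind n u j (Fin.last (n + 1)) ≤ ((u j : ℕ) : ℝ)) →
      a ≤ (n : ℝ) - 2) ∧
    (∀ b : ℝ,
      (∀ u : Fin (n + 2) → Fin (n + 2), IsDroneTour n u →
        ∀ j : Fin (n + 2), j ≠ 0 → j ≠ Fin.last (n + 1) →
          ((u j : ℕ) : ℝ) ≤ ((n : ℝ) + 1) - b * xind n u 0 j
            - (1 - xind n u j (Fin.last (n + 1)))) →
      b ≤ (n : ℝ) - 1) ∧
    (∀ c : ℝ,
      (∀ u : Fin (n + 2) → Fin (n + 2), IsDroneTour n u →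
        ∀ i j : Fin (n + 2), i ≠ j → i ≠ Fin.last (n + 1) → j ≠ 0 → i ≠ 0 →
          ((u i : ℕ) : ℝ) - ((u j : ℕ) : ℝ) + ((n : ℝ) + 1) * xind n u i j
            + c * xind n u j i ≤ (n : ℝ)) →
      c ≤ (n : ℝ) - 1) := by
  have tour := isDroneTour_id n
  have hn_one : n ≠ 1 := by omega
  let first : Fin (n + 2) := ⟨1, by omega⟩
  let second : Fin (n + 2) := ⟨2, by omega⟩
  let final : Fin (n + 2) := ⟨n, by omega⟩
  have first_ne_zero : first ≠ 0 := Fin.ne_of_val_ne one_ne_zero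
  have second_ne_zero : second ≠ 0 := Fin.ne_of_val_ne two_ne_zero
  have final_ne_zero : final ≠ 0 := Fin.ne_of_val_ne (show n ≠ 0 by omega)
  have first_ne_last : first ≠ Fin.last (n + 1) := Fin.ne_of_val_ne (show 1 ≠ n + 1 by omega)
  have second_ne_last : second ≠ Fin.last (n + 1) := Fin.ne_of_val_ne (show 2 ≠ n + 1 by omega)
  have final_ne_last : final ≠ Fin.last (n + 1) := Fin.ne_of_val_ne n.lt_succ_self.ne
  have second_ne_first : second ≠ first := Fin.ne_of_val_ne (Nat.succ_ne_self 1)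
  refine ⟨fun a valid => ?_, fun b valid => ?_, fun c valid => ?_⟩
  · exact tour.dl1_lower_coeff_le hn_one rfl (valid id tour final final_ne_zero final_ne_last)
  · exact tour.dl1_upper_coeff_le hn_one rfl (valid id tour first first_ne_zero first_ne_last)
  · exact tour.dl2_coeff_le rfl
      (valid id tour second first second_ne_first second_ne_last first_ne_zero second_ne_zero)
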